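/- Under twist on splitting sets and absolute continuity of the first marginal, the optimal plan is unique and Monge: if c is continuous, semi-concave, and twisted on c-splitting sets, and μ₁ is absolutely continuous with respect to Lebesgue measure, then any optimizer γ of ∫ c dγ over plans with marginals μ₁,...,μₘ is of the form γ = (Id, T)_# μ₁ for a Borel map T : M₁ → M₂ × ... × Mₘ, and γ is the unique optimizer. -/

import Mathlib

open MeasureTheory

/-- A c-splitting set: a set on which some potentials u, v₁,...,vₘ with
u(x₁) + ∑ᵢ vᵢ(xᵢ) ≤ c achieve equality. -/
def IsSplittingSet {E : Type*} {ι : Type*} [Fintype ι] {M : ι → Type*}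
    (c : E × (∀ i, M i) → ℝ) (S : Set (E × ∀ i, M i)) : Prop :=
  ∃ (u : E → ℝ) (v : ∀ i, M i → ℝ),
    (∀ p, u p.1 + ∑ i, v i (p.2 i) ≤ c p) ∧
    (∀ p ∈ S, u p.1 + ∑ i, v i (p.2 i) = c p)

/-!
A duality gap, a number `r < ∫ c ∂γ` not exceeded by the integral of any separable function below
`c`, would allow extending `∫ · ∂γ` from the separable functions to a positive functional with
value `r` at `c`; this functional is a measure by Riesz, and so a plan cheaper than `γ`. Replacing
potentials by `c`-transforms and normalising them makes them equicontinuous and bounded, so by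
Arzelà–Ascoli the dual maximum is attained, by some `(u, v)` with `u` a `c`-transform.

Semi-concavity of `c` in `x₁` passes to the infimum `u`, which is therefore differentiable almost
everywhere. Where `u x + ∑ i, v i (z i) = c (x, z)`, the semi-concave function `c (·, z)` is touched
from below by a function differentiable at `x`, so it is differentiable there with derivative
`Du x`, and the twist condition lets `x` determine `z`. Equality holds almost surely for every
optimal plan with the given marginals, so all of them are carried by one and the same graph.
-/

open Filter
open scoped CompactlySupported Topology

section PositiveFunctionals

lemma exists_nonneg_extension_eq {E : Type*} [AddCommGroup E] [PartialOrder E]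
    [IsOrderedAddMonoid E] [Module ℝ E] [PosSMulMono ℝ E] (V : Submodule ℝ E)
    (hV : ∀ x, ∃ h ∈ V, x ≤ h) (I : E →ₗ[ℝ] ℝ) (hI : ∀ x, 0 ≤ x → 0 ≤ I x) {c : E} {r : ℝ}
    (hr : ∀ h ∈ V, h ≤ c → I h ≤ r) (hrc : r ≤ I c) :
    ∃ g : E →ₗ[ℝ] ℝ, (∀ x, 0 ≤ x → 0 ≤ g x) ∧ (∀ h ∈ V, g h = I h) ∧ g c = r := by
  by_cases hc : c ∈ V
  · exact ⟨I, hI, fun _ _ => rfl, (hr c hc le_rfl).antisymm hrc⟩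
  let f : E →ₗ.[ℝ] ℝ := LinearPMap.supSpanSingleton ⟨V, I.domRestrict V⟩ c r hc
  have f_nonneg (x : f.domain) (hx : 0 ≤ (x : E)) : 0 ≤ f x := by
    obtain ⟨x, hxf⟩ := x
    obtain ⟨h, hh, _, ht, rfl⟩ := Submodule.mem_sup.1 hxf
    obtain ⟨t, rfl⟩ := Submodule.mem_span_singleton.1 ht
    suffices 0 ≤ I h + t * r by
      rwa [LinearPMap.supSpanSingleton_apply_mk _ _ _ hc _ hh]
    rcases le_or_gt t 0 with ht | ht
    · have := hI _ hx
      rw [map_add, map_smul, smul_eq_mul] at this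
      linarith [mul_le_mul_of_nonpos_left hrc ht]
    · have hle : -(t⁻¹ • h) ≤ c := by
        have := smul_le_smul_of_nonneg_left hx (inv_nonneg.2 ht.le)
        rw [smul_zero, smul_add, inv_smul_smul₀ ht.ne'] at this
        exact neg_le_iff_add_nonneg'.2 this
      have := hr _ (V.neg_mem (V.smul_mem _ hh)) hle
      rw [map_neg, map_smul, smul_eq_mul, neg_le, inv_mul_eq_div, le_div_iff₀ ht] at this
      linarith
  obtain ⟨g, hgf, hg⟩ := riesz_extension (PointedCone.positive ℝ E) f
    (fun x hx => f_nonneg x ((PointedCone.mem_positive ℝ E).1 hx)) (fun y => by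
      obtain ⟨h, hh, hle⟩ := hV (-y)
      exact ⟨⟨h, Submodule.mem_sup_left hh⟩, (PointedCone.mem_positive ℝ E).2
        (neg_le_iff_add_nonneg.1 hle)⟩)
  refine ⟨g, fun x hx => hg x ((PointedCone.mem_positive ℝ E).2 hx), fun h hh => ?_, ?_⟩
  · exact (hgf ⟨h, Submodule.mem_sup_left hh⟩).trans
      (LinearPMap.supSpanSingleton_apply_mk_of_mem _ _ hc hh)
  · exact (hgf ⟨c, Submodule.mem_sup_right (Submodule.mem_span_singleton_self c)⟩).trans
      (LinearPMap.supSpanSingleton_apply_self _ _ hc)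

variable {X : Type*} [TopologicalSpace X] [MeasurableSpace X]

lemma integrable_of_isCompact_of_ae_mem [T2Space X] [OpensMeasurableSpace X]
    {γ : Measure X} [IsFiniteMeasure γ] {s : Set X} (hs : IsCompact s) (hγ : ∀ᵐ x ∂γ, x ∈ s)
    (f : C(X, ℝ)) : Integrable f γ := by
  rw [← Measure.restrict_eq_self_of_ae_mem hγ]
  exact f.continuous.continuousOn.integrableOn_compact hs

lemma integrable_of_ae_map_fst_mem {Y : Type*} [TopologicalSpace Y] [MeasurableSpace Y]
    [T2Space X] [T2Space Y] [CompactSpace Y] [OpensMeasurableSpace (X × Y)]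
    {γ : Measure (X × Y)} [IsFiniteMeasure γ] {K : Set X} (hK : IsCompact K)
    (hγK : ∀ᵐ x ∂γ.map Prod.fst, x ∈ K) (f : C(X × Y, ℝ)) : Integrable f γ :=
  integrable_of_isCompact_of_ae_mem (hK.prod isCompact_univ)
    (by simpa using ae_of_ae_map measurable_fst.aemeasurable hγK) f

variable [CompactSpace X] [BorelSpace X]

lemma exists_isFiniteMeasure_forall_integral_eq [T2Space X] (g : C(X, ℝ) →ₗ[ℝ] ℝ)
    (hg : ∀ f, 0 ≤ f → 0 ≤ g f) :
    ∃ π : Measure X, IsFiniteMeasure π ∧ ∀ f : C(X, ℝ), ∫ x, f x ∂π = g f := by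
  let Λ : C_c(X, ℝ) →ₚ[ℝ] ℝ := PositiveLinearMap.mk₀
    { toFun := fun f => g f
      map_add' := fun f f' => map_add g (f : C(X, ℝ)) f'
      map_smul' := fun t f => map_smul g t (f : C(X, ℝ)) }
    fun f hf => hg f hf
  exact ⟨RealRMK.rieszMeasure Λ, inferInstance, fun f =>
    RealRMK.integral_rieszMeasure Λ (CompactlySupportedContinuousMap.continuousMapEquiv f)⟩

lemma integrable_of_compactSpace (γ : Measure X) [IsFiniteMeasure γ] (f : C(X, ℝ)) :
    Integrable f γ :=
  f.continuous.integrable_of_hasCompactSupport (.of_compactSpace f)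

/-- Integration against `γ` as a continuous linear functional, to be extended from a subspace and
maximised over compact sets. -/
noncomputable def integralFunctional (γ : Measure X) [IsFiniteMeasure γ] : C(X, ℝ) →L[ℝ] ℝ :=
  LinearMap.mkContinuous
    { toFun := fun f => ∫ x, f x ∂γ
      map_add' := fun f g =>
        integral_add (integrable_of_compactSpace γ f) (integrable_of_compactSpace γ g)
      map_smul' := fun t f => integral_const_mul t f }
    (γ.real Set.univ) fun f => by
      rw [mul_comm]
      exact norm_integral_le_of_norm_le_const (.of_forall f.norm_coe_le_norm)

lemma exists_mem_le_lt_integral [T2Space X] (V : Submodule ℝ C(X, ℝ))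
    (hV : (1 : C(X, ℝ)) ∈ V) (γ : Measure X) [IsFiniteMeasure γ] {c : C(X, ℝ)}
    (hopt : ∀ γ' : Measure X, IsFiniteMeasure γ' →
      (∀ h ∈ V, ∫ x, h x ∂γ' = ∫ x, h x ∂γ) → ∫ x, c x ∂γ ≤ ∫ x, c x ∂γ')
    {r : ℝ} (hr : r < ∫ x, c x ∂γ) :
    ∃ h ∈ V, h ≤ c ∧ r < ∫ x, h x ∂γ := by
  by_contra! hle
  have hcofinal (f : C(X, ℝ)) : ∃ h ∈ V, f ≤ h := by
    refine ⟨‖f‖ • 1, V.smul_mem _ hV, fun x => ?_⟩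
    simpa using (le_abs_self _).trans (f.norm_coe_le_norm x)
  obtain ⟨g, hg, hgV, hgc⟩ := exists_nonneg_extension_eq V hcofinal
    (integralFunctional γ).toLinearMap (fun f hf => integral_nonneg hf) hle hr.le
  obtain ⟨π, hπ, hπg⟩ := exists_isFiniteMeasure_forall_integral_eq g hg
  have := hopt π hπ fun h hh => (hπg h).trans (hgV h hh)
  rw [hπg, hgc] at this
  exact this.not_gt hr

end PositiveFunctionals

section CTransform

variable {X Y : Type*} [TopologicalSpace X] [CompactSpace X] [TopologicalSpace Y]

/-- `f` oscillates at most as much as `F` does in its first variable, uniformly in the second: the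
modulus of continuity inherited by `c`-transforms. -/
def HasModulusOf (F : C(Y × X, ℝ)) (f : Y → ℝ) : Prop :=
  ∀ y y', dist (f y) (f y') ≤ dist (F.curry y) (F.curry y')

lemma tendsto_dist_curry (F : C(Y × X, ℝ)) (y : Y) :
    Tendsto (fun y' => dist (F.curry y) (F.curry y')) (𝓝 y) (𝓝 0) :=
  (continuous_const.dist F.curry.continuous).tendsto' y 0 (dist_self _)

lemma HasModulusOf.continuous {F : C(Y × X, ℝ)} {f : Y → ℝ} (hf : HasModulusOf F f) :
    Continuous f := continuous_iff_continuousAt.2 fun y => tendsto_iff_dist_tendsto_zero.2 <|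
  squeeze_zero (fun _ => dist_nonneg) (fun y' => dist_comm (f y) (f y') ▸ hf y y')
    (tendsto_dist_curry F y)

lemma HasModulusOf.abs_sub_le {F : C(Y × X, ℝ)} {f : Y → ℝ} (hf : HasModulusOf F f) {B : ℝ}
    (hB : 0 ≤ B) (hF : ∀ q, |F q| ≤ B) (y y' : Y) : |f y - f y'| ≤ 2 * B := by
  refine (hf y y').trans ((ContinuousMap.dist_le (by positivity)).2 fun x => ?_)
  rw [two_mul]
  exact (abs_sub _ _).trans (add_le_add (hF _) (hF _))

lemma isCompact_setOf_hasModulusOf (F : C(Y × X, ℝ)) (R : ℝ) :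
    IsCompact {f : C(Y, ℝ) | HasModulusOf F f ∧ ∀ y, |f y| ≤ R} := by
  let S : Set (Y → ℝ) := {f | HasModulusOf F f} ∩ Set.univ.pi fun _ => Set.Icc (-R) R
  have hclosed : IsClosed {f : Y → ℝ | HasModulusOf F f} := by
    simp only [HasModulusOf, Set.ofPred_forall]
    exact isClosed_iInter fun y => isClosed_iInter fun y' =>
      isClosed_le (by fun_prop) continuous_const
  have hS : IsCompact S := (isCompact_univ_pi fun _ => isCompact_Icc).inter_left hclosed
  apply ArzelaAscoli.isCompact_of_equicontinuous
  · convert hS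
    ext f
    constructor
    · rintro ⟨f, hf, rfl⟩
      exact ⟨hf.1, fun y _ => abs_le.1 (hf.2 y)⟩
    · rintro ⟨hf, hR⟩
      exact ⟨⟨f, HasModulusOf.continuous hf⟩, ⟨hf, fun y => abs_le.2 (hR y trivial)⟩, rfl⟩
  · exact fun y => Metric.equicontinuousAt_of_continuity_modulus _ (tendsto_dist_curry F y) _
      (.of_forall fun y' f => f.2.1 y y')

variable [Nonempty X]

lemma lipschitzWith_iInf : LipschitzWith 1 fun f : C(X, ℝ) => ⨅ x, f x := by
  refine LipschitzWith.of_le_add fun f g => ?_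
  rw [← sub_le_iff_le_add]
  refine le_ciInf fun x => sub_le_iff_le_add.2 ?_
  calc ⨅ x, f x ≤ f x := ciInf_le (isCompact_range f.continuous).bddBelow x
    _ ≤ g x + dist (f x) (g x) := by linarith [le_abs_self (f x - g x), Real.dist_eq (f x) (g x)]
    _ ≤ g x + dist f g := by gcongr; exact f.dist_apply_le_dist x

/-- The `c`-transform of `w` for the cost `F`, the largest `f` with `f y + w x ≤ F (y, x)`. -/
noncomputable def cTransform (F : C(Y × X, ℝ)) (w : C(X, ℝ)) : C(Y, ℝ) where
  toFun y := ⨅ x, (F.curry y - w) x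
  continuous_toFun := lipschitzWith_iInf.continuous.comp (by fun_prop)

variable (F : C(Y × X, ℝ)) (w : C(X, ℝ))

lemma cTransform_add_le (y : Y) (x : X) : cTransform F w y + w x ≤ F (y, x) :=
  le_sub_iff_add_le.1 (ciInf_le (isCompact_range (F.curry y - w).continuous).bddBelow x)

variable {F w} in
lemma le_cTransform {y : Y} {r : ℝ} (h : ∀ x, r + w x ≤ F (y, x)) : r ≤ cTransform F w y :=
  le_ciInf fun x => le_sub_iff_add_le.2 (h x)

lemma hasModulusOf_cTransform : HasModulusOf F (cTransform F w) := fun y y' =>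
  calc dist (cTransform F w y) (cTransform F w y') ≤ dist (F.curry y - w) (F.curry y' - w) :=
        (lipschitzWith_iInf.dist_le_mul _ _).trans_eq (by rw [NNReal.coe_one, one_mul])
    _ = dist (F.curry y) (F.curry y') := dist_sub_right _ _ _

variable {F w} in
lemma abs_cTransform_le {B D : ℝ} (hF : ∀ q, |F q| ≤ B) (hw : ∀ x, |w x| ≤ D) (y : Y) :
    |cTransform F w y| ≤ B + D := by
  obtain ⟨x⟩ := ‹Nonempty X›
  refine abs_le.2 ⟨le_cTransform fun x' => ?_, ?_⟩
  · linarith [abs_le.1 (hF (y, x')), abs_le.1 (hw x')]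
  · linarith [abs_le.1 (hF (y, x)), abs_le.1 (hw x), cTransform_add_le F w y x]

end CTransform

lemma concaveOn_cTransform_sub {X E : Type*} [TopologicalSpace X] [CompactSpace X] [Nonempty X]
    [AddCommGroup E] [Module ℝ E] [TopologicalSpace E] {s : Set E} {φ : E → ℝ}
    {F : C(E × X, ℝ)} (hF : ∀ x, ConcaveOn ℝ s fun y => F (y, x) - φ y) (w : C(X, ℝ)) :
    ConcaveOn ℝ s fun y => cTransform F w y - φ y := by
  obtain ⟨x₀⟩ := ‹Nonempty X›
  refine ⟨(hF x₀).1, fun y hy y' hy' a b ha hb hab => ?_⟩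
  rw [le_sub_iff_add_le]
  refine le_cTransform fun x => ?_
  have hconc := (hF x).2 hy hy' ha hb hab
  have h := mul_le_mul_of_nonneg_left (cTransform_add_le F w y x) ha
  have h' := mul_le_mul_of_nonneg_left (cTransform_add_le F w y' x) hb
  have hw : a * w x + b * w x = w x := by rw [← add_mul, hab, one_mul]
  simp only [smul_eq_mul] at hconc ⊢
  linarith

section Potentials

variable {A ι : Type*} {M : ι → Type*} [TopologicalSpace A] [∀ i, TopologicalSpace (M i)]

/-- `c (x, z)` as a function of the coordinate `z i`, with all other coordinates as parameters:
the cost whose transform improves the `i`-th potential. The value `q.2.2 i` is ignored. -/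
def coordSlice [DecidableEq ι] (c : C(A × ∀ i, M i, ℝ)) (i : ι) :
    C(M i × (A × ∀ i, M i), ℝ) where
  toFun q := c (q.2.1, Function.update q.2.2 i q.1)

@[simp]
lemma coordSlice_apply [DecidableEq ι] (c : C(A × ∀ i, M i, ℝ)) (i : ι)
    (q : M i × (A × ∀ i, M i)) :
    coordSlice c i q = c (q.2.1, Function.update q.2.2 i q.1) := rfl

variable [Fintype ι]

/-- The function `z ↦ ∑ i, v i (z i)` built from potentials `v`, as a linear map in `v`. -/
def coordSum : (∀ i, C(M i, ℝ)) →ₗ[ℝ] C(∀ i, M i, ℝ) where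
  toFun v := ∑ i, (v i).comp (.eval i)
  map_add' v w := by ext z; simp [Finset.sum_add_distrib]
  map_smul' t v := by ext z; simp [Finset.mul_sum]

@[simp]
lemma coordSum_apply (v : ∀ i, C(M i, ℝ)) (z : ∀ i, M i) : coordSum v z = ∑ i, v i (z i) := by
  simp [coordSum]

lemma coordSum_update_apply [DecidableEq ι] (v : ∀ i, C(M i, ℝ)) (i : ι) (f : C(M i, ℝ))
    (z : ∀ i, M i) :
    coordSum (Function.update v i f) z = f (z i) + ∑ j ∈ Finset.univ.erase i, v j (z j) := by
  rw [coordSum_apply, ← Finset.add_sum_erase _ _ (Finset.mem_univ i), Function.update_self]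
  congr 1
  exact Finset.sum_congr rfl fun j hj => by rw [Function.update_of_ne (Finset.ne_of_mem_erase hj)]

lemma coordSum_single_apply [DecidableEq ι] (i : ι) (f : C(M i, ℝ)) (z : ∀ i, M i) :
    coordSum (Pi.single i f) z = f (z i) := by
  rw [Pi.single, coordSum_update_apply]
  simp

/-- The function `(x, z) ↦ u x + ∑ i, v i (z i)` built from the potentials `w = (u, v)`. -/
def potentialSum : (C(A, ℝ) × ∀ i, C(M i, ℝ)) →ₗ[ℝ] C(A × ∀ i, M i, ℝ) where
  toFun w := w.1.comp .fst + (coordSum w.2).comp .snd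
  map_add' w w' := by ext p; simp; ring
  map_smul' t w := by ext p; simp

@[simp]
lemma potentialSum_apply (w : C(A, ℝ) × ∀ i, C(M i, ℝ)) (p : A × ∀ i, M i) :
    potentialSum w p = w.1 p.1 + coordSum w.2 p.2 := rfl

variable [CompactSpace A] [∀ i, CompactSpace (M i)]

lemma continuous_potentialSum :
    Continuous (potentialSum : (C(A, ℝ) × ∀ i, C(M i, ℝ)) → C(A × ∀ i, M i, ℝ)) := by
  have hcoord : Continuous (coordSum : (∀ i, C(M i, ℝ)) → C(∀ i, M i, ℝ)) :=
    continuous_finsetSum _ fun i _ =>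
      (ContinuousMap.continuous_precomp _).comp (continuous_apply i)
  exact ((ContinuousMap.continuous_precomp _).comp continuous_fst).add
    ((ContinuousMap.continuous_precomp _).comp (hcoord.comp continuous_snd))

/-- A compact set of potentials for the cost `c` that contains, for each admissible family of
potentials, one that dominates it: the moduli of continuity come from `c`-transforms, the bounds
from normalising `v i` to vanish at a base point. -/
def boundedPotentials [DecidableEq ι] (c : C(A × ∀ i, M i, ℝ)) :
    Set (C(A, ℝ) × ∀ i, C(M i, ℝ)) :=
  {u : C(A, ℝ) | HasModulusOf c u ∧ ∀ x, |u x| ≤ ‖c‖ + Fintype.card ι * (2 * ‖c‖)} ×ˢ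
    Set.univ.pi fun i =>
      {f : C(M i, ℝ) | HasModulusOf (coordSlice c i) f ∧ ∀ y, |f y| ≤ 2 * ‖c‖}

lemma isCompact_boundedPotentials [DecidableEq ι] (c : C(A × ∀ i, M i, ℝ)) :
    IsCompact (boundedPotentials c) :=
  (isCompact_setOf_hasModulusOf _ _).prod <|
    isCompact_univ_pi fun _ => isCompact_setOf_hasModulusOf _ _

variable [Nonempty A] [∀ i, Nonempty (M i)]

lemma exists_update_hasModulusOf [DecidableEq ι] {c : C(A × ∀ i, M i, ℝ)} {u : C(A, ℝ)}
    {v : ∀ i, C(M i, ℝ)} (hle : potentialSum (u, v) ≤ c) (i : ι) :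
    ∃ g, v i ≤ g ∧ potentialSum (u, Function.update v i g) ≤ c ∧
      HasModulusOf (coordSlice c i) g := by
  let rest : C(A × ∀ i, M i, ℝ) := potentialSum (u, Function.update v i 0)
  have potentialSum_update (f : C(M i, ℝ)) (p : A × ∀ i, M i) :
      potentialSum (u, Function.update v i f) p = f (p.2 i) + rest p := by
    simp only [rest, potentialSum_apply, coordSum_update_apply, ContinuousMap.zero_apply]
    ring
  have rest_update (p : A × ∀ i, M i) (y : M i) :
      rest (p.1, Function.update p.2 i y) = rest p := by
    simp only [rest, potentialSum_apply, coordSum_update_apply, ContinuousMap.zero_apply]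
    congr 2
    exact Finset.sum_congr rfl fun j hj => by
      rw [Function.update_of_ne (Finset.ne_of_mem_erase hj)]
  refine ⟨cTransform (coordSlice c i) rest, fun y => le_cTransform fun p => ?_, fun p => ?_,
    hasModulusOf_cTransform _ _⟩
  · have : potentialSum (u, v) (p.1, Function.update p.2 i y) ≤ c _ := hle _
    rw [← Function.update_eq_self i v, potentialSum_update, rest_update] at this
    simpa using this
  · have := cTransform_add_le (coordSlice c i) rest (p.2 i) p
    rwa [← potentialSum_update, coordSlice_apply, Function.update_eq_self] at this

lemma exists_forall_mem_hasModulusOf [DecidableEq ι] {c : C(A × ∀ i, M i, ℝ)} {u : C(A, ℝ)}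
    {v : ∀ i, C(M i, ℝ)} (hle : potentialSum (u, v) ≤ c) (s : Finset ι) :
    ∃ v', v ≤ v' ∧ potentialSum (u, v') ≤ c ∧ ∀ i ∈ s, HasModulusOf (coordSlice c i) (v' i) := by
  induction s using Finset.induction_on with
  | empty => exact ⟨v, le_rfl, hle, by simp⟩
  | insert i s _ ih =>
    obtain ⟨v', hvv', hle', hmod⟩ := ih
    obtain ⟨g, hg, hgle, hgmod⟩ := exists_update_hasModulusOf hle' i
    refine ⟨Function.update v' i g, hvv'.trans (le_update_self_iff.2 hg), hgle,
      fun j hj => ?_⟩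
    rcases eq_or_ne j i with rfl | hji
    · rwa [Function.update_self]
    · rw [Function.update_of_ne hji]
      exact hmod j (Finset.mem_of_mem_insert_of_ne hj hji)

lemma exists_mem_boundedPotentials_le [DecidableEq ι] {c : C(A × ∀ i, M i, ℝ)}
    {w : C(A, ℝ) × ∀ i, C(M i, ℝ)} (hle : potentialSum w ≤ c) :
    ∃ w' ∈ boundedPotentials c, potentialSum w ≤ potentialSum w' ∧ potentialSum w' ≤ c := by
  obtain ⟨u, v⟩ := w
  obtain ⟨v', hvv', hle', hmod⟩ := exists_forall_mem_hasModulusOf hle Finset.univ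
  obtain ⟨z₀⟩ : Nonempty (∀ i, M i) := inferInstance
  let v₀ : ∀ i, C(M i, ℝ) := fun i => v' i - .const _ (v' i (z₀ i))
  have coordSum_v₀ (z : ∀ i, M i) : coordSum v₀ z = coordSum v' z - coordSum v' z₀ := by
    simp [v₀, Finset.sum_sub_distrib]
  have norm_c (q : A × ∀ i, M i) : |c q| ≤ ‖c‖ := c.norm_coe_le_norm q
  have v₀_mod (i : ι) : HasModulusOf (coordSlice c i) (v₀ i) := fun y y' =>
    (dist_sub_right _ _ _).trans_le (hmod i (Finset.mem_univ i) y y')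
  have v₀_bound (i : ι) (y : M i) : |v₀ i y| ≤ 2 * ‖c‖ :=
    (hmod i (Finset.mem_univ i)).abs_sub_le (norm_nonneg c) (fun _ => norm_c _) y (z₀ i)
  have coordSum_v₀_bound (z : ∀ i, M i) : |coordSum v₀ z| ≤ Fintype.card ι * (2 * ‖c‖) := by
    rw [coordSum_apply, ← nsmul_eq_mul]
    exact (Finset.abs_sum_le_sum_abs _ _).trans
      (Finset.sum_le_card_nsmul _ _ _ fun i _ => v₀_bound i (z i))
  have hmem : (cTransform c (coordSum v₀), v₀) ∈ boundedPotentials c :=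
    ⟨⟨hasModulusOf_cTransform _ _, abs_cTransform_le norm_c coordSum_v₀_bound⟩,
      fun i _ => ⟨v₀_mod i, v₀_bound i⟩⟩
  refine ⟨_, hmem, fun p => ?_, fun p => cTransform_add_le c (coordSum v₀) p.1 p.2⟩
  have u_le : u p.1 + coordSum v' z₀ ≤ cTransform c (coordSum v₀) p.1 :=
    le_cTransform fun z => by
      have : u p.1 + coordSum v' z ≤ c (p.1, z) := hle' (p.1, z)
      linarith [coordSum_v₀ z]
  have v_le : coordSum v p.2 ≤ coordSum v' p.2 := by
    simp only [coordSum_apply]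
    exact Finset.sum_le_sum fun i _ => hvv' i (p.2 i)
  have := coordSum_v₀ p.2
  change u p.1 + coordSum v p.2 ≤ cTransform c (coordSum v₀) p.1 + coordSum v₀ p.2
  linarith

end Potentials

section Marginals

variable {A ι : Type*} {M : ι → Type*} [MeasurableSpace A] [∀ i, MeasurableSpace (M i)]

/-- The plans `γ` and `γ'` compete in the same multi-marginal transport problem. -/
def SameMarginals (γ γ' : Measure (A × ∀ i, M i)) : Prop :=
  γ.map Prod.fst = γ'.map Prod.fst ∧ ∀ i, γ.map (fun p => p.2 i) = γ'.map fun p => p.2 i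

lemma SameMarginals.isFiniteMeasure {γ γ' : Measure (A × ∀ i, M i)} (h : SameMarginals γ γ')
    [IsFiniteMeasure γ'] : IsFiniteMeasure γ := by
  have : IsFiniteMeasure (γ.map Prod.fst) := h.1 ▸ inferInstance
  exact Measure.isFiniteMeasure_of_map measurable_fst.aemeasurable

lemma SameMarginals.isProbabilityMeasure {γ γ' : Measure (A × ∀ i, M i)}
    (h : SameMarginals γ γ') [IsProbabilityMeasure γ'] : IsProbabilityMeasure γ := by
  have : IsProbabilityMeasure (γ.map Prod.fst) :=
    h.1 ▸ Measure.isProbabilityMeasure_map measurable_fst.aemeasurable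
  exact Measure.isProbabilityMeasure_of_map Prod.fst

/-- `γ` minimises the transport cost `∫ c` among the plans with its marginals. -/
def IsOptimalPlan (c : A × (∀ i, M i) → ℝ) (γ : Measure (A × ∀ i, M i)) : Prop :=
  ∀ γ', SameMarginals γ' γ → ∫ p, c p ∂γ ≤ ∫ p, c p ∂γ'

end Marginals

section Duality

variable {A ι : Type*} [Fintype ι] {M : ι → Type*} [TopologicalSpace A] [MeasurableSpace A]
  [BorelSpace A] [∀ i, TopologicalSpace (M i)] [∀ i, PolishSpace (M i)]
  [∀ i, MeasurableSpace (M i)] [∀ i, BorelSpace (M i)]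

lemma sameMarginals_of_forall_integral_potentialSum_eq [PolishSpace A]
    {γ γ' : Measure (A × ∀ i, M i)} [IsFiniteMeasure γ] [IsFiniteMeasure γ']
    (h : ∀ w, ∫ p, potentialSum w p ∂γ' = ∫ p, potentialSum w p ∂γ) : SameMarginals γ' γ := by
  classical
  constructor
  · refine ext_of_forall_integral_eq_of_IsFiniteMeasure fun f => ?_
    rw [integral_map (by fun_prop) (by fun_prop), integral_map (by fun_prop) (by fun_prop)]
    simpa using h (f, 0)
  · intro i
    refine ext_of_forall_integral_eq_of_IsFiniteMeasure fun f => ?_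
    rw [integral_map (by fun_prop) (by fun_prop), integral_map (by fun_prop) (by fun_prop)]
    simpa [coordSum_single_apply, -coordSum_apply] using h (0, Pi.single i f.toContinuousMap)

variable [CompactSpace A] [Nonempty A] [∀ i, CompactSpace (M i)] [∀ i, Nonempty (M i)]

lemma exists_forall_integral_potentialSum_le (c : C(A × ∀ i, M i, ℝ)) (γ : Measure (A × ∀ i, M i))
    [IsFiniteMeasure γ] : ∃ w, potentialSum w ≤ c ∧ ∀ w', potentialSum w' ≤ c →
      ∫ p, potentialSum w' p ∂γ ≤ ∫ p, potentialSum w p ∂γ := by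
  classical
  have hclosed : IsClosed {w | potentialSum w ≤ c} := by
    simp only [ContinuousMap.le_def, Set.ofPred_forall]
    exact isClosed_iInter fun p => isClosed_le
      ((continuous_eval_const p).comp continuous_potentialSum) continuous_const
  have hcompact := (isCompact_boundedPotentials c).inter_right hclosed
  obtain ⟨w₀, hw₀, -, hw₀c⟩ := exists_mem_boundedPotentials_le (c := c) (w := (.const _ (-‖c‖), 0))
    fun p => by simpa using neg_le_of_abs_le (c.norm_coe_le_norm p)
  obtain ⟨w, ⟨-, hwc⟩, hmax⟩ := hcompact.exists_isMaxOn ⟨w₀, hw₀, hw₀c⟩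
    ((integralFunctional γ).continuous.comp continuous_potentialSum).continuousOn
  refine ⟨w, hwc, fun w' hw' => ?_⟩
  obtain ⟨w'', hw'', hle, hw''c⟩ := exists_mem_boundedPotentials_le hw'
  calc ∫ p, potentialSum w' p ∂γ ≤ ∫ p, potentialSum w'' p ∂γ :=
        integral_mono (integrable_of_compactSpace γ _) (integrable_of_compactSpace γ _) hle
    _ ≤ ∫ p, potentialSum w p ∂γ := hmax ⟨hw'', hw''c⟩

theorem IsOptimalPlan.exists_integral_le_integral_potentialSum [PolishSpace A]
    {c : C(A × ∀ i, M i, ℝ)} {γ : Measure (A × ∀ i, M i)} [IsFiniteMeasure γ]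
    (hopt : IsOptimalPlan c γ) :
    ∃ w, potentialSum w ≤ c ∧ ∫ p, c p ∂γ ≤ ∫ p, potentialSum w p ∂γ := by
  obtain ⟨w, hwc, hmax⟩ := exists_forall_integral_potentialSum_le c γ
  refine ⟨w, hwc, le_of_forall_lt fun r hr => ?_⟩
  have one_mem : (1 : C(A × ∀ i, M i, ℝ)) ∈ LinearMap.range potentialSum :=
    ⟨(1, 0), by ext p; simp⟩
  obtain ⟨-, ⟨w', rfl⟩, hw'c, hlt⟩ := exists_mem_le_lt_integral (LinearMap.range potentialSum)
    one_mem γ (fun γ' _ h => hopt γ' <|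
      sameMarginals_of_forall_integral_potentialSum_eq fun w => h _ ⟨w, rfl⟩) hr
  exact hlt.trans_le (hmax w' hw'c)

end Duality

section Pushforward

variable {A B ι : Type*} {M : ι → Type*} [MeasurableSpace A] [MeasurableSpace B]
  [∀ i, MeasurableSpace (M i)]

lemma SameMarginals.map_prodMap {γ γ' : Measure (A × ∀ i, M i)} (h : SameMarginals γ γ')
    {f : A → B} (hf : Measurable f) :
    SameMarginals (γ.map (Prod.map f id)) (γ'.map (Prod.map f id)) := by
  have hf' : Measurable (Prod.map f (id : (∀ i, M i) → _)) := hf.prodMap measurable_id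
  have map_fst (π : Measure (A × ∀ i, M i)) :
      (π.map (Prod.map f id)).map Prod.fst = (π.map Prod.fst).map f := by
    rw [Measure.map_map measurable_fst hf', Measure.map_map hf measurable_fst, Prod.map_fst']
  refine ⟨by rw [map_fst, map_fst, h.1], fun i => ?_⟩
  rw [Measure.map_map (by fun_prop) hf', Measure.map_map (by fun_prop) hf']
  exact h.2 i

lemma IsOptimalPlan.of_map_prodMap {f : A → B} (hf : MeasurableEmbedding f)
    {c : B × (∀ i, M i) → ℝ} {γ : Measure (A × ∀ i, M i)}
    (hopt : IsOptimalPlan c (γ.map (Prod.map f id))) :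
    IsOptimalPlan (c ∘ Prod.map f id) γ := by
  intro γ' h
  have hj : MeasurableEmbedding (Prod.map f (id : (∀ i, M i) → _)) := hf.prodMap .id
  have := hopt _ (h.map_prodMap hf.measurable)
  rwa [hj.integral_map, hj.integral_map] at this

end Pushforward

section DualityOnCompactSupport

variable {A ι : Type*} [Fintype ι] {M : ι → Type*} [TopologicalSpace A] [MeasurableSpace A]
  [BorelSpace A] [∀ i, TopologicalSpace (M i)]
  [∀ i, MeasurableSpace (M i)] [∀ i, BorelSpace (M i)]

lemma integral_potentialSum {γ : Measure (A × ∀ i, M i)}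
    (hγ : ∀ f : C(A × ∀ i, M i, ℝ), Integrable f γ) (w : C(A, ℝ) × ∀ i, C(M i, ℝ)) :
    ∫ p, potentialSum w p ∂γ = ∫ x, w.1 x ∂γ.map Prod.fst +
      ∑ i, ∫ y, w.2 i y ∂γ.map fun p => p.2 i := by
  have hfst : Integrable (fun p => w.1 p.1) γ := hγ (w.1.comp .fst)
  have hcoord (i : ι) : Integrable (fun p => w.2 i (p.2 i)) γ :=
    hγ ((w.2 i).comp ((ContinuousMap.eval i).comp .snd))
  simp only [potentialSum_apply, coordSum_apply]
  rw [integral_add hfst (integrable_finsetSum _ fun i _ => hcoord i),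
    integral_finsetSum _ fun i _ => hcoord i,
    integral_map (by fun_prop) (by fun_prop)]
  congr 1
  exact Finset.sum_congr rfl fun i _ => (integral_map (by fun_prop) (by fun_prop)).symm

variable [PolishSpace A] [∀ i, PolishSpace (M i)] [∀ i, CompactSpace (M i)] [∀ i, Nonempty (M i)]

theorem IsOptimalPlan.exists_integral_le_integral_cTransform {c : C(A × ∀ i, M i, ℝ)}
    {γ : Measure (A × ∀ i, M i)} [IsFiniteMeasure γ] (hopt : IsOptimalPlan c γ) {K : Set A}
    (hK : IsCompact K) (hγK : ∀ᵐ p ∂γ, p.1 ∈ K) :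
    ∃ v, ∫ p, c p ∂γ ≤ ∫ p, potentialSum (cTransform c (coordSum v), v) p ∂γ := by
  rcases K.eq_empty_or_nonempty with rfl | hne
  · have : γ = 0 := by simpa using hγK
    exact ⟨0, by simp [this]⟩
  have : CompactSpace K := isCompact_iff_compactSpace.1 hK
  have : Nonempty K := hne.to_subtype
  have : PolishSpace K := hK.isClosed.polishSpace
  have hval := MeasurableEmbedding.subtype_coe hK.measurableSet
  let j : C(K × (∀ i, M i), A × ∀ i, M i) := ⟨Prod.map (↑) id, by fun_prop⟩
  have hj : MeasurableEmbedding j := hval.prodMap .id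
  let γK : Measure (K × ∀ i, M i) := γ.comap j
  have map_γK : γK.map j = γ := by
    rw [hj.map_comap]
    refine Measure.restrict_eq_self_of_ae_mem ?_
    filter_upwards [hγK] with p hp using ⟨(⟨p.1, hp⟩, p.2), rfl⟩
  have : IsFiniteMeasure γK := by
    have : IsFiniteMeasure (γK.map j) := map_γK.symm ▸ inferInstance
    exact Measure.isFiniteMeasure_of_map hj.measurable.aemeasurable
  have hoptK : IsOptimalPlan (c.comp j) γK :=
    IsOptimalPlan.of_map_prodMap hval (map_γK.symm ▸ hopt)
  obtain ⟨w, hwc, hle⟩ := hoptK.exists_integral_le_integral_potentialSum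
  refine ⟨w.2, ?_⟩
  rw [← map_γK, hj.integral_map, hj.integral_map]
  refine hle.trans (integral_mono (integrable_of_compactSpace γK _)
    (integrable_of_compactSpace γK ((potentialSum _).comp j)) fun p => ?_)
  have hu : w.1 p.1 ≤ cTransform c (coordSum w.2) p.1 := le_cTransform fun z => hwc (p.1, z)
  exact add_le_add_left hu (coordSum w.2 p.2)

end DualityOnCompactSupport

section Differentiability

variable {E : Type*} [NormedAddCommGroup E] [NormedSpace ℝ E]

lemma hasFDerivAt_of_concaveOn_of_le {F G : E → ℝ} {L : E →L[ℝ] ℝ} {x : E}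
    (hF : ConcaveOn ℝ Set.univ F) (hle : ∀ y, G y ≤ F y) (heq : G x = F x)
    (hG : HasFDerivAt G L x) : HasFDerivAt F L x := by
  have midpoint (h : E) : F (x + h) + F (x - h) ≤ 2 * F x := by
    have := hF.2 (Set.mem_univ (x + h)) (Set.mem_univ (x - h)) one_half_pos.le one_half_pos.le
      (add_halves 1)
    rw [show (1 / 2 : ℝ) • (x + h) + (1 / 2 : ℝ) • (x - h) = x by module] at this
    simp only [smul_eq_mul] at this
    linarith
  rw [hasFDerivAt_iff_isLittleO_nhds_zero] at hG ⊢
  have hneg : (fun h : E => G (x - h) - G x + L h) =o[𝓝 0] fun h => h := by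
    have := hG.comp_tendsto (continuous_neg.tendsto' (0 : E) 0 neg_zero)
    exact Asymptotics.isLittleO_neg_right.1
      (by simpa [Function.comp_def, sub_eq_add_neg] using this)
  -- Concavity of `F` gives `0 ≤ F (x + h) - G (x + h) ≤ 2 * G x - G (x + h) - G (x - h)`.
  have hdiff : (fun h : E => F (x + h) - G (x + h)) =o[𝓝 0] fun h => h := by
    refine (Asymptotics.isBigO_of_le _ fun h => ?_).trans_isLittleO (hG.add hneg)
    have := hle (x + h)
    have := hle (x - h)
    have := midpoint h
    rw [Real.norm_of_nonneg (by linarith), Real.norm_eq_abs, le_abs]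
    right
    linarith
  refine (hG.add hdiff).congr_left fun h => ?_
  rw [heq]
  ring

lemma ae_differentiableAt_of_concaveOn_univ [FiniteDimensional ℝ E] [MeasurableSpace E]
    [BorelSpace E] (ν : Measure E) [ν.IsAddHaarMeasure] {F : E → ℝ}
    (hF : ConcaveOn ℝ Set.univ F) : ∀ᵐ x ∂ν, DifferentiableAt ℝ F x := by
  refine measure_null_of_locally_null _ fun x _ => ?_
  obtain ⟨K, t, ht, hK⟩ := locallyLipschitzOn_univ.1 (hF.locallyLipschitzOn isOpen_univ) x
  refine ⟨_, inter_mem_nhdsWithin _ (interior_mem_nhds.2 ht), ?_⟩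
  refine measure_mono_null ?_ (hK.mono interior_subset).ae_differentiableWithinAt_of_mem
  rintro y ⟨hy, hyt⟩ hdiff
  exact hy ((hdiff hyt).differentiableAt (isOpen_interior.mem_nhds hyt))

end Differentiability

section ContactSet

/-- The twist condition: on a splitting set over a point `x₁`, the other coordinates are
determined by the derivative of `c` in its first variable at `x₁`. -/
def IsTwistedOnSplittingSets {E ι : Type*} [NormedAddCommGroup E] [NormedSpace ℝ E] [Fintype ι]
    {M : ι → Type*} (c : E × (∀ i, M i) → ℝ) : Prop :=
  ∀ (x₁ : E) (S : Set (E × ∀ i, M i)), S ⊆ {p | p.1 = x₁} → IsSplittingSet c S →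
    ∀ p ∈ S, ∀ q ∈ S, DifferentiableAt ℝ (fun x => c (x, p.2)) x₁ →
      DifferentiableAt ℝ (fun x => c (x, q.2)) x₁ →
      fderiv ℝ (fun x => c (x, p.2)) x₁ = fderiv ℝ (fun x => c (x, q.2)) x₁ → p = q

variable {E ι : Type*} [NormedAddCommGroup E] [NormedSpace ℝ E] [Fintype ι] {M : ι → Type*}
  [∀ i, TopologicalSpace (M i)]

/-- The points where the potentials `w` saturate the constraint `potentialSum w ≤ c`, restricted
to those over which the first potential is differentiable. -/
def contactSet (c : C(E × ∀ i, M i, ℝ)) (w : C(E, ℝ) × ∀ i, C(M i, ℝ)) : Set (E × ∀ i, M i) :=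
  {p | DifferentiableAt ℝ w.1 p.1 ∧ potentialSum w p = c p}

lemma injOn_fst_contactSet {c : C(E × ∀ i, M i, ℝ)} {w : C(E, ℝ) × ∀ i, C(M i, ℝ)}
    (hwc : potentialSum w ≤ c) {φ : E → ℝ} (hφ : Differentiable ℝ φ)
    (hconc : ∀ z, ConcaveOn ℝ Set.univ fun x => c (x, z) - φ x)
    (htwist : IsTwistedOnSplittingSets c) : Set.InjOn Prod.fst (contactSet c w) := by
  have hasFDerivAt_cost {p} (hp : p ∈ contactSet c w) :
      HasFDerivAt (fun x => c (x, p.2)) (fderiv ℝ w.1 p.1) p.1 := by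
    have hφp := (hφ p.1).hasFDerivAt
    have hsub := (hp.1.hasFDerivAt.add_const (coordSum w.2 p.2)).sub hφp
    have := (hasFDerivAt_of_concaveOn_of_le (hconc p.2)
      (fun x => sub_le_sub_right (hwc (x, p.2)) (φ x)) (congrArg (· - φ p.1) hp.2) hsub).fun_add hφp
    simpa using this
  rintro ⟨x, z⟩ hp ⟨y, z'⟩ hq (rfl : x = y)
  have hpc := hasFDerivAt_cost hp
  have hqc := hasFDerivAt_cost hq
  refine htwist x {r | r.1 = x ∧ potentialSum w r = c r} (fun r hr => hr.1)
    ⟨w.1, fun i => w.2 i, fun r => ?_, fun r hr => ?_⟩ _ ⟨rfl, hp.2⟩ _ ⟨rfl, hq.2⟩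
    hpc.differentiableAt hqc.differentiableAt (hpc.fderiv.trans hqc.fderiv.symm)
  · simpa using hwc r
  · simpa using hr.2

end ContactSet

section Graph

variable {A Z : Type*} [MeasurableSpace A] [MeasurableSpace Z]

lemma exists_measurable_forall_mem_eq_snd [StandardBorelSpace A] [StandardBorelSpace Z]
    [Nonempty Z] {G : Set (A × Z)} (hG : MeasurableSet G) (hinj : Set.InjOn Prod.fst G) :
    ∃ T : A → Z, Measurable T ∧ ∀ p ∈ G, T p.1 = p.2 := by
  have := hG.standardBorel
  have hfst : MeasurableEmbedding fun p : G => p.1.1 :=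
    (measurable_fst.comp measurable_subtype_coe).measurableEmbedding
      fun a b h => Subtype.ext (hinj a.2 b.2 h)
  obtain ⟨T, hT, hTG⟩ := hfst.exists_measurable_extend
    (measurable_snd.comp measurable_subtype_coe) fun _ => ‹Nonempty Z›
  exact ⟨T, hT, fun p hp => congrFun hTG ⟨p, hp⟩⟩

lemma eq_map_graph_of_ae_eq_snd {γ : Measure (A × Z)} {T : A → Z} (hT : Measurable T)
    (hγ : ∀ᵐ p ∂γ, T p.1 = p.2) : γ = (γ.map Prod.fst).map fun x => (x, T x) := by
  rw [Measure.map_map (by fun_prop) measurable_fst]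
  conv_lhs => rw [← Measure.map_id (μ := γ)]
  refine Measure.map_congr ?_
  filter_upwards [hγ] with p hp
  exact Prod.ext rfl hp.symm

end Graph

section Monge

variable {E ι : Type*} [NormedAddCommGroup E] [NormedSpace ℝ E] [MeasurableSpace E]
  [BorelSpace E] [Fintype ι] {M : ι → Type*} [∀ i, TopologicalSpace (M i)]
  [∀ i, PolishSpace (M i)] [∀ i, MeasurableSpace (M i)] [∀ i, BorelSpace (M i)]

lemma measurableSet_contactSet (c : C(E × ∀ i, M i, ℝ)) (w : C(E, ℝ) × ∀ i, C(M i, ℝ)) :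
    MeasurableSet (contactSet c w) :=
  (measurable_fst (measurableSet_of_differentiableAt ℝ w.1)).inter
    (isClosed_eq (potentialSum w).continuous c.continuous).measurableSet

variable [∀ i, CompactSpace (M i)]

lemma SameMarginals.ae_mem_contactSet {γ γ' : Measure (E × ∀ i, M i)} [IsFiniteMeasure γ]
    (h : SameMarginals γ' γ) {c : C(E × ∀ i, M i, ℝ)} {w : C(E, ℝ) × ∀ i, C(M i, ℝ)}
    (hwc : potentialSum w ≤ c) {K : Set E} (hK : IsCompact K)
    (hγK : ∀ᵐ x ∂γ.map Prod.fst, x ∈ K)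
    (hdiff : ∀ᵐ x ∂γ.map Prod.fst, DifferentiableAt ℝ w.1 x)
    (hle : ∫ p, c p ∂γ' ≤ ∫ p, potentialSum w p ∂γ) : ∀ᵐ p ∂γ', p ∈ contactSet c w := by
  have := h.isFiniteMeasure
  have integrable := integrable_of_ae_map_fst_mem hK (h.1.symm ▸ hγK)
  have potentialSum_eq : ∫ p, potentialSum w p ∂γ' = ∫ p, potentialSum w p ∂γ := by
    simp only [integral_potentialSum integrable,
      integral_potentialSum (integrable_of_ae_map_fst_mem hK hγK), h.1, h.2]
  have heq := (integral_eq_iff_of_ae_le (integrable _) (integrable _) (.of_forall hwc)).1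
    ((integral_mono (integrable _) (integrable _) hwc).antisymm (hle.trans_eq potentialSum_eq.symm))
  rw [← h.1] at hdiff
  filter_upwards [ae_of_ae_map measurable_fst.aemeasurable hdiff, heq] with p hp hpc
  exact ⟨hp, hpc⟩

variable [FiniteDimensional ℝ E] [∀ i, Nonempty (M i)]

theorem monge_solution_and_uniqueness_general (ν : Measure E) [ν.IsAddHaarMeasure]
    (c : C(E × ∀ i, M i, ℝ)) {φ : E → ℝ} (hφ : Differentiable ℝ φ)
    (hconc : ∀ z, ConcaveOn ℝ Set.univ fun x => c (x, z) - φ x)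
    (htwist : IsTwistedOnSplittingSets c) {γ : Measure (E × ∀ i, M i)} [IsFiniteMeasure γ]
    (hac : γ.map Prod.fst ≪ ν) {K : Set E} (hK : IsCompact K)
    (hγK : ∀ᵐ x ∂γ.map Prod.fst, x ∈ K) (hopt : IsOptimalPlan c γ) :
    (∃ T : E → ∀ i, M i, Measurable T ∧ γ = (γ.map Prod.fst).map fun x => (x, T x)) ∧
      ∀ γ', SameMarginals γ' γ → ∫ p, c p ∂γ' ≤ ∫ p, c p ∂γ → γ' = γ := by
  obtain ⟨v, hv⟩ := hopt.exists_integral_le_integral_cTransform hK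
    (ae_of_ae_map measurable_fst.aemeasurable hγK)
  set w := (cTransform c (coordSum v), v)
  have hwc : potentialSum w ≤ c := fun p => cTransform_add_le c (coordSum v) p.1 p.2
  have hdiff : ∀ᵐ x ∂γ.map Prod.fst, DifferentiableAt ℝ w.1 x := hac.ae_le <| by
    filter_upwards [ae_differentiableAt_of_concaveOn_univ ν
      (concaveOn_cTransform_sub hconc (coordSum v))] with x hx
    simpa [w] using hx.fun_add (hφ x)
  have hgraph (γ') (hγ' : SameMarginals γ' γ) (hle : ∫ p, c p ∂γ' ≤ ∫ p, c p ∂γ) :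
      ∀ᵐ p ∂γ', p ∈ contactSet c w :=
    hγ'.ae_mem_contactSet hwc hK hγK hdiff (hle.trans hv)
  obtain ⟨T, hT, hTG⟩ := exists_measurable_forall_mem_eq_snd (measurableSet_contactSet c w)
    (injOn_fst_contactSet hwc hφ hconc htwist)
  have eq_map (γ') (hγ' : SameMarginals γ' γ) (hle : ∫ p, c p ∂γ' ≤ ∫ p, c p ∂γ) :
      γ' = (γ.map Prod.fst).map fun x => (x, T x) :=
    hγ'.1 ▸ eq_map_graph_of_ae_eq_snd hT ((hgraph γ' hγ' hle).mono hTG)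
  have hγ := eq_map γ ⟨rfl, fun _ => rfl⟩ le_rfl
  exact ⟨⟨T, hT, hγ⟩, fun γ' hγ' hle => (eq_map γ' hγ' hle).trans hγ.symm⟩

end Monge

/-- Theorem 3.1: if c is continuous, semi-concave in x₁ and twisted on c-splitting
sets, and the first marginal μ₁ is absolutely continuous (with compact support),
then any optimal plan γ is induced by a Borel map T (Monge solution) and is the
unique optimal plan. -/
theorem monge_solution_and_uniqueness
    {n : ℕ} {ι : Type*} [Fintype ι] {M : ι → Type*}
    [∀ i, MetricSpace (M i)] [∀ i, CompactSpace (M i)] [∀ i, Nonempty (M i)]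
    [∀ i, MeasurableSpace (M i)] [∀ i, BorelSpace (M i)]
    (c : EuclideanSpace ℝ (Fin n) × (∀ i, M i) → ℝ) (hcont : Continuous c)
    (C : ℝ)
    (hsc : ∀ z : ∀ i, M i,
      ConcaveOn ℝ Set.univ fun x : EuclideanSpace ℝ (Fin n) => c (x, z) - C * ‖x‖ ^ 2)
    (htwist : ∀ x₁ : EuclideanSpace ℝ (Fin n),
      ∀ S : Set (EuclideanSpace ℝ (Fin n) × ∀ i, M i), S ⊆ {p | p.1 = x₁} →
      IsSplittingSet c S →
      ∀ p ∈ S, ∀ q ∈ S,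
        DifferentiableAt ℝ (fun x => c (x, p.2)) x₁ →
        DifferentiableAt ℝ (fun x => c (x, q.2)) x₁ →
        fderiv ℝ (fun x => c (x, p.2)) x₁ = fderiv ℝ (fun x => c (x, q.2)) x₁ →
        p = q)
    (μ₁ : Measure (EuclideanSpace ℝ (Fin n))) [IsProbabilityMeasure μ₁]
    (hac : μ₁ ≪ volume)
    (K : Set (EuclideanSpace ℝ (Fin n))) (hK : IsCompact K) (hμK : μ₁ K = 1)
    (μ : ∀ i, Measure (M i)) [∀ i, IsProbabilityMeasure (μ i)]
    (γ : Measure (EuclideanSpace ℝ (Fin n) × ∀ i, M i)) [IsProbabilityMeasure γ]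
    (hγ₁ : γ.map Prod.fst = μ₁) (hγᵢ : ∀ i, γ.map (fun p => p.2 i) = μ i)
    (hopt : ∀ γ' : Measure (EuclideanSpace ℝ (Fin n) × ∀ i, M i),
      IsProbabilityMeasure γ' → γ'.map Prod.fst = μ₁ →
      (∀ i, γ'.map (fun p => p.2 i) = μ i) →
      ∫ p, c p ∂γ ≤ ∫ p, c p ∂γ') :
    (∃ T : EuclideanSpace ℝ (Fin n) → ∀ i, M i,
      Measurable T ∧ γ = μ₁.map (fun x => (x, T x))) ∧
    (∀ γ' : Measure (EuclideanSpace ℝ (Fin n) × ∀ i, M i),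
      IsProbabilityMeasure γ' → γ'.map Prod.fst = μ₁ →
      (∀ i, γ'.map (fun p => p.2 i) = μ i) →
      ∫ p, c p ∂γ' ≤ ∫ p, c p ∂γ → γ' = γ) := by
  obtain rfl : μ = fun i => γ.map fun p => p.2 i := funext fun i => (hγᵢ i).symm
  subst hγ₁
  obtain ⟨hT, huniq⟩ := monge_solution_and_uniqueness_general volume ⟨c, hcont⟩
    ((differentiable_id.norm_sq ℝ).const_mul C) hsc htwist hac hK
    ((mem_ae_iff_prob_eq_one hK.measurableSet).2 hμK)
    fun γ' h => hopt γ' h.isProbabilityMeasure h.1 h.2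
  exact ⟨hT, fun γ' _ h₁ hᵢ hle => huniq γ' ⟨h₁, hᵢ⟩ hle⟩
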